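/- Let m and n be positive integers with n ≥ 4 even, let 0 ≤ ℓ ≤ n−1 be an integer of the same parity as m, and let G = ⟨t, x, y | t² = 1, x^{n/2} = 1, y^m = x^{(ℓ+m)/2}, txt = x⁻¹, tyt = y⁻¹, xy = yx⟩. Then there exists an automorphism of G of order 3 fixing the set {t, tx, ty} setwise if and only if gcd(n, ℓ+m) = gcd(n, ℓ−m) = 2m and 2mn divides ℓ² + 3m². -/

import Mathlib

namespace HTGPaper

/-- The honeycomb toroidal graph `HTG(m,n,ℓ)`. -/
def HTG (m n ℓ : ℕ) : SimpleGraph (ZMod m × ZMod n) :=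
  SimpleGraph.fromRel (fun v w =>
    (v.1 = w.1 ∧ (w.2 = v.2 + 1 ∨ w.2 = v.2 - 1)) ∨
    (v.1.val ≠ m - 1 ∧ w.1 = v.1 + 1 ∧ w.2 = v.2 ∧ v.1.val % 2 ≠ v.2.val % 2) ∨
    (v.1.val = m - 1 ∧ w.1 = 0 ∧ w.2 = v.2 + (ℓ : ZMod n) ∧ v.2.val % 2 = m % 2))

/-- Generators of the generalized dihedral group `G`. -/
inductive Gen | t | x | y

/-- Relators of the presentation of `G`. -/
def rels (m n ℓ : ℕ) : Set (FreeGroup Gen) :=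
  {FreeGroup.of Gen.t ^ 2,
   FreeGroup.of Gen.x ^ (n / 2),
   FreeGroup.of Gen.y ^ m * (FreeGroup.of Gen.x ^ ((ℓ + m) / 2))⁻¹,
   FreeGroup.of Gen.t * FreeGroup.of Gen.x * (FreeGroup.of Gen.t)⁻¹ * FreeGroup.of Gen.x,
   FreeGroup.of Gen.t * FreeGroup.of Gen.y * (FreeGroup.of Gen.t)⁻¹ * FreeGroup.of Gen.y,
   FreeGroup.of Gen.x * FreeGroup.of Gen.y * (FreeGroup.of Gen.x)⁻¹ * (FreeGroup.of Gen.y)⁻¹}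

/-- The group `G = ⟨t,x,y | t², x^{n/2}, y^m x^{-(ℓ+m)/2}, txt⁻¹x, tyt⁻¹y, [x,y]⟩`. -/
abbrev G (m n ℓ : ℕ) : Type := PresentedGroup (rels m n ℓ)

def gent (m n ℓ : ℕ) : G m n ℓ := PresentedGroup.of Gen.t
def genx (m n ℓ : ℕ) : G m n ℓ := PresentedGroup.of Gen.x
def geny (m n ℓ : ℕ) : G m n ℓ := PresentedGroup.of Gen.y

/-- The connection set `{t, tx, ty}`. -/
def S (m n ℓ : ℕ) : Set (G m n ℓ) :=
  {gent m n ℓ, gent m n ℓ * genx m n ℓ, gent m n ℓ * geny m n ℓ}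

/-- The Cayley graph of a group with respect to a subset. -/
def cayley (H : Type*) [Group H] (T : Set H) : SimpleGraph H :=
  SimpleGraph.fromRel (fun g h => ∃ s ∈ T, h = g * s)

/-- The Cayley graph of an additive group with respect to a subset. -/
def addCayley (H : Type*) [AddGroup H] (T : Set H) : SimpleGraph H :=
  SimpleGraph.fromRel (fun g h => ∃ s ∈ T, h = g + s)

/-- `Cay(H;T)` is a normal Cayley graph of `H` if the left regular representation `H_L`
is a normal subgroup of the automorphism group, i.e. every conjugate of a left
translation by a graph automorphism is again a left translation. -/
def IsNormalCayley (H : Type*) [Group H] (T : Set H) : Prop :=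
  ∀ (f : cayley H T ≃g cayley H T) (a : H), ∃ b : H,
    ∀ g : H, f (a * f.symm g) = b * g

/-- An `s`-arc of a graph: `s+1` vertices, consecutive ones adjacent, and any three
consecutive vertices pairwise distinct. -/
def IsSArc {V : Type*} (Γ : SimpleGraph V) (s : ℕ) (p : Fin (s + 1) → V) : Prop :=
  (∀ i : Fin s, Γ.Adj (p i.castSucc) (p i.succ)) ∧
  ∀ i j : Fin (s + 1), (i : ℕ) + 2 = (j : ℕ) → p i ≠ p j

/-- A graph is `s`-arc-transitive if its automorphism group is transitive on `s`-arcs. -/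
def IsSArcTransitive {V : Type*} (Γ : SimpleGraph V) (s : ℕ) : Prop :=
  ∀ p q : Fin (s + 1) → V, IsSArc Γ s p → IsSArc Γ s q →
    ∃ f : Γ ≃g Γ, ∀ i, f (p i) = q i

/-- A graph is `s`-arc-regular if its automorphism group is regular on `s`-arcs. -/
def IsSArcRegular {V : Type*} (Γ : SimpleGraph V) (s : ℕ) : Prop :=
  ∀ p q : Fin (s + 1) → V, IsSArc Γ s p → IsSArc Γ s q →
    ∃! f : Γ ≃g Γ, ∀ i, f (p i) = q i

/-- A graph is arc-transitive if it is `1`-arc-transitive. -/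
def IsArcTransitive {V : Type*} (Γ : SimpleGraph V) : Prop :=
  IsSArcTransitive Γ 1

/-- The generalized prism `GPr(k)`. -/
def GPr (k : ℕ) : SimpleGraph (ZMod 2 × ZMod (2 * k)) :=
  SimpleGraph.fromRel (fun v w =>
    (v.1 = w.1 ∧ (w.2 = v.2 + 1 ∨ w.2 = v.2 - 1)) ∨
    (Even v.2.val ∧ w.1 = v.1 + 1 ∧ w.2 = v.2 + 1))

/-- The cubic graph on `k` vertices given by LCF-type data `f`. -/
def lcfGraph (k : ℕ) (f : ℕ → ℤ) : SimpleGraph (ZMod k) :=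
  SimpleGraph.fromRel (fun v w => w = v + 1 ∨ w = v + (f v.val : ZMod k))

/-- The cube graph `Q₃`, LCF notation `[3,-3]⁴`. -/
def cubeGraph : SimpleGraph (ZMod 8) :=
  lcfGraph 8 (fun i => if i % 2 = 0 then 3 else -3)

/-- The Heawood graph, LCF notation `[5,-5]⁷`. -/
def heawood : SimpleGraph (ZMod 14) :=
  lcfGraph 14 (fun i => if i % 2 = 0 then 5 else -5)

/-- The Möbius–Kantor graph, LCF notation `[5,-5]⁸`. -/
def mobiusKantor : SimpleGraph (ZMod 16) :=
  lcfGraph 16 (fun i => if i % 2 = 0 then 5 else -5)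

/-- The Pappus graph, LCF notation `[5,7,-7,7,-7,-5]³`. -/
def pappus : SimpleGraph (ZMod 18) :=
  lcfGraph 18 (fun i =>
    match i % 6 with
    | 0 => 5 | 1 => 7 | 2 => -7 | 3 => 7 | 4 => -7 | _ => -5)

/-- The red edges of `HTG(m,n,ℓ) = Cay(G;{t,tx,ty})`. -/
def Red (m n ℓ : ℕ) : Set (Sym2 (G m n ℓ)) :=
  {e | ∃ g : G m n ℓ, e = s(g, g * gent m n ℓ)}

/-- The blue edges. -/
def Blue (m n ℓ : ℕ) : Set (Sym2 (G m n ℓ)) :=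
  {e | ∃ g : G m n ℓ, e = s(g, g * (gent m n ℓ * genx m n ℓ))}

/-- The green edges. -/
def Green (m n ℓ : ℕ) : Set (Sym2 (G m n ℓ)) :=
  {e | ∃ g : G m n ℓ, e = s(g, g * (gent m n ℓ * geny m n ℓ))}

/-- The three color classes. -/
def colorClasses (m n ℓ : ℕ) : Set (Set (Sym2 (G m n ℓ))) :=
  {Red m n ℓ, Blue m n ℓ, Green m n ℓ}

/-- An automorphism of `Cay(G;{t,tx,ty})` is color permuting if it preserves the
partition of the edges into the three color classes. -/
def IsColorPermuting {m n ℓ : ℕ}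
    (f : cayley (G m n ℓ) (S m n ℓ) ≃g cayley (G m n ℓ) (S m n ℓ)) : Prop :=
  ∀ C ∈ colorClasses m n ℓ, Sym2.map ⇑f '' C ∈ colorClasses m n ℓ

/-- The group `Aut(H;T)` of automorphisms of `H` fixing `T` setwise. -/
def autFixing (H : Type*) [Group H] (T : Set H) : Subgroup (MulAut H) where
  carrier := {φ | ⇑φ '' T = T}
  one_mem' := by
    show ⇑(1 : MulAut H) '' T = T
    simp
  mul_mem' := by
    intro a b ha hb
    show ⇑(a * b) '' T = T
    have h : ⇑(a * b) = ⇑a ∘ ⇑b := rfl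
    rw [h, Set.image_comp]
    rw [show ⇑b '' T = T from hb, show ⇑a '' T = T from ha]
  inv_mem' := by
    intro a ha
    show ⇑a⁻¹ '' T = T
    conv_lhs => rw [← show ⇑a '' T = T from ha]
    rw [← Set.image_comp]
    have h : ⇑a⁻¹ ∘ ⇑a = id := by
      funext g
      simp
    rw [h, Set.image_id]



section helpers
variable (m n ℓ : ℕ)

lemma rel_one {r : FreeGroup Gen} (h : r ∈ rels m n ℓ) :
    PresentedGroup.mk (rels m n ℓ) r = 1 := PresentedGroup.one_of_mem h

lemma rel_t : gent m n ℓ * gent m n ℓ = 1 := by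
  have h := rel_one m n ℓ (r := FreeGroup.of Gen.t ^ 2) (by simp [rels])
  rw [pow_two, map_mul] at h
  exact h

lemma rel_x : genx m n ℓ ^ (n / 2) = 1 := by
  have h := rel_one m n ℓ (r := FreeGroup.of Gen.x ^ (n / 2)) (by simp [rels])
  rw [map_pow] at h
  exact h

lemma rel_y : geny m n ℓ ^ m = genx m n ℓ ^ ((ℓ + m) / 2) := by
  have h := rel_one m n ℓ
    (r := FreeGroup.of Gen.y ^ m * (FreeGroup.of Gen.x ^ ((ℓ + m) / 2))⁻¹) (by simp [rels])
  rw [map_mul, map_inv, map_pow, map_pow, mul_inv_eq_one] at h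
  exact h

lemma rel_tx : gent m n ℓ * genx m n ℓ * (gent m n ℓ)⁻¹ * genx m n ℓ = 1 := by
  have h := rel_one m n ℓ
    (r := FreeGroup.of Gen.t * FreeGroup.of Gen.x * (FreeGroup.of Gen.t)⁻¹ * FreeGroup.of Gen.x)
    (by simp [rels])
  simp only [map_mul, map_inv] at h
  exact h

lemma rel_ty : gent m n ℓ * geny m n ℓ * (gent m n ℓ)⁻¹ * geny m n ℓ = 1 := by
  have h := rel_one m n ℓ
    (r := FreeGroup.of Gen.t * FreeGroup.of Gen.y * (FreeGroup.of Gen.t)⁻¹ * FreeGroup.of Gen.y)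
    (by simp [rels])
  simp only [map_mul, map_inv] at h
  exact h

lemma rel_xy : Commute (genx m n ℓ) (geny m n ℓ) := by
  have h := rel_one m n ℓ
    (r := FreeGroup.of Gen.x * FreeGroup.of Gen.y * (FreeGroup.of Gen.x)⁻¹ * (FreeGroup.of Gen.y)⁻¹)
    (by simp [rels])
  simp only [map_mul, map_inv] at h
  have h2 : genx m n ℓ * geny m n ℓ * (genx m n ℓ)⁻¹ * (geny m n ℓ)⁻¹ = 1 := h
  rw [mul_inv_eq_one, mul_inv_eq_iff_eq_mul] at h2
  exact h2

/-- The lattice of relations. -/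
def Lam : AddSubgroup (ℤ × ℤ) :=
  AddSubgroup.closure {(((n / 2 : ℕ) : ℤ), 0), (-(((ℓ + m) / 2 : ℕ) : ℤ), (m : ℤ))}

/-- Images of the generators as permutations of the quotient. -/
def permGen : Gen → Equiv.Perm ((ℤ × ℤ) ⧸ Lam m n ℓ)
  | Gen.t => Equiv.neg _
  | Gen.x => Equiv.addLeft (QuotientAddGroup.mk' (Lam m n ℓ) (1, 0))
  | Gen.y => Equiv.addLeft (QuotientAddGroup.mk' (Lam m n ℓ) (0, 1))

lemma addLeft_pow {A : Type*} [AddCommGroup A] (a : A) (k : ℕ) :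
    (Equiv.addLeft a : Equiv.Perm A) ^ k = Equiv.addLeft (k • a) := by
  induction k with
  | zero => ext z; simp
  | succ k ih => ext z; rw [pow_succ, ih]; simp [succ_nsmul, add_assoc]

lemma addLeft_zpow {A : Type*} [AddCommGroup A] (a : A) (k : ℤ) :
    (Equiv.addLeft a : Equiv.Perm A) ^ k = Equiv.addLeft (k • a) := by
  cases k with
  | ofNat k => simpa using addLeft_pow a k
  | negSucc k =>
    rw [zpow_negSucc, addLeft_pow, inv_eq_iff_mul_eq_one]
    ext z
    simp [negSucc_zsmul]

lemma perm_rels : ∀ r ∈ rels m n ℓ, FreeGroup.lift (permGen m n ℓ) r = 1 := by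
  intro r hr
  have h1 : (((n / 2 : ℕ) : ℤ), (0 : ℤ)) ∈ Lam m n ℓ := AddSubgroup.subset_closure (by simp)
  have h2 : (-(((ℓ + m) / 2 : ℕ) : ℤ), (m : ℤ)) ∈ Lam m n ℓ :=
    AddSubgroup.subset_closure (by simp)
  simp only [rels, Set.mem_insert_iff, Set.mem_singleton_iff] at hr
  rcases hr with rfl | rfl | rfl | rfl | rfl | rfl
  · ext z; simp [permGen, pow_two]
  · simp only [map_pow, FreeGroup.lift_apply_of, permGen, addLeft_pow, ← map_nsmul]
    have : QuotientAddGroup.mk' (Lam m n ℓ) ((n / 2) • ((1 : ℤ), (0 : ℤ))) = 0 := by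
      rw [QuotientAddGroup.mk'_apply, QuotientAddGroup.eq_zero_iff]
      simpa using h1
    rw [this]; ext z; simp
  · simp only [map_mul, map_inv, map_pow, FreeGroup.lift_apply_of, permGen, addLeft_pow,
      ← map_nsmul, mul_inv_eq_one]
    congr 1
    rw [← sub_eq_zero, ← map_sub, QuotientAddGroup.mk'_apply, QuotientAddGroup.eq_zero_iff]
    simpa using h2
  · simp only [map_mul, map_inv, FreeGroup.lift_apply_of, permGen]
    ext z
    simp [Equiv.Perm.inv_def]
  · simp only [map_mul, map_inv, FreeGroup.lift_apply_of, permGen]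
    ext z
    simp [Equiv.Perm.inv_def]
  · simp only [map_mul, map_inv, FreeGroup.lift_apply_of, permGen, mul_inv_eq_iff_eq_mul,
      mul_inv_eq_one]
    ext z
    simp [add_left_comm]

lemma mem_Lam {a b : ℤ} (h : genx m n ℓ ^ a * geny m n ℓ ^ b = 1) : (a, b) ∈ Lam m n ℓ := by
  have h' := congrArg (PresentedGroup.toGroup (perm_rels m n ℓ)) h
  simp only [map_mul, map_zpow, genx, geny, PresentedGroup.toGroup.of, permGen, addLeft_zpow,
    ← map_zsmul, map_one] at h'
  have h3 := Equiv.congr_fun h' 0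
  simp only [Equiv.Perm.mul_apply, Equiv.coe_addLeft, Equiv.Perm.one_apply, add_zero,
    ← map_add] at h3
  rw [QuotientAddGroup.mk'_apply, QuotientAddGroup.eq_zero_iff] at h3
  simpa using h3

lemma mem_Lam' {a b : ℤ} (h : genx m n ℓ ^ a * geny m n ℓ ^ b = 1) :
    ∃ r s : ℤ, r * (n / 2 : ℕ) - s * ((ℓ + m) / 2 : ℕ) = a ∧ s * m = b := by
  obtain ⟨r, s, hrs⟩ := AddSubgroup.mem_closure_pair.1 (mem_Lam m n ℓ h)
  refine ⟨r, s, ?_⟩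
  simp only [Prod.smul_mk, Prod.mk_add_mk, Prod.mk.injEq, smul_eq_mul] at hrs
  constructor
  · linarith [hrs.1]
  · linarith [hrs.2]

lemma x_ne_one (hm : 0 < m) (hn : 4 ≤ n) : genx m n ℓ ≠ 1 := by
  intro h
  obtain ⟨r, s, h1, h2⟩ := mem_Lam' m n ℓ (a := 1) (b := 0) (by simp [h])
  have hs : s = 0 := by
    rcases mul_eq_zero.1 h2 with h | h
    · exact h
    · omega
  subst hs
  have h3 : ((n / 2 : ℕ) : ℤ) ∣ 1 := ⟨r, by linarith⟩
  have := Int.le_of_dvd one_pos h3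
  omega

lemma hom_ext' {H : Type*} [Group H] {f g : G m n ℓ →* H} (ht : f (gent m n ℓ) = g (gent m n ℓ))
    (hx : f (genx m n ℓ) = g (genx m n ℓ)) (hy : f (geny m n ℓ) = g (geny m n ℓ)) : f = g := by
  apply PresentedGroup.ext
  intro a
  cases a
  · exact ht
  · exact hx
  · exact hy

/-- The arithmetic condition in lattice form. -/
def Cond : Prop := m ∣ n / 2 ∧ m ∣ (ℓ + m) / 2 ∧
  ((m : ℤ) * (n / 2 : ℕ)) ∣ (((ℓ + m) / 2 : ℕ) : ℤ) ^ 2 - m * ((ℓ + m) / 2 : ℕ) + m ^ 2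

lemma cond_of_hom (hm : 0 < m) (hn : 4 ≤ n) (f : G m n ℓ →* G m n ℓ)
    (h0 : f (gent m n ℓ) = gent m n ℓ * genx m n ℓ)
    (h1 : f (gent m n ℓ * genx m n ℓ) = gent m n ℓ * geny m n ℓ)
    (h2 : f (gent m n ℓ * geny m n ℓ) = gent m n ℓ) : Cond m n ℓ := by
  have hc := rel_xy m n ℓ
  have hX := rel_x m n ℓ
  have hY := rel_y m n ℓ
  have e1 : f (genx m n ℓ) = (genx m n ℓ)⁻¹ * geny m n ℓ := by
    rw [map_mul, h0, mul_assoc] at h1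
    rw [eq_inv_mul_iff_mul_eq]; exact mul_left_cancel h1
  have e2 : f (geny m n ℓ) = (genx m n ℓ)⁻¹ := by
    rw [map_mul, h0, mul_assoc] at h2
    rw [← mul_eq_one_iff_eq_inv']
    exact mul_left_cancel (h2.trans (mul_one _).symm)
  have a1 := congrArg f hX
  have a2 := congrArg f hY
  rw [map_pow, e1, map_one, hc.inv_left.mul_pow] at a1
  rw [map_pow, map_pow, e1, e2, hc.inv_left.mul_pow] at a2
  generalize hN : n / 2 = N at *
  generalize hk : (ℓ + m) / 2 = k at *
  obtain ⟨r, s, b1, b2⟩ := mem_Lam' m n ℓ (a := -(N : ℤ)) (b := N) (by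
    rw [← a1]; simp)
  obtain ⟨r', s', b3, b4⟩ := mem_Lam' m n ℓ (a := (m : ℤ) - k) (b := k) (by
    have : (genx m n ℓ) ^ m * ((genx m n ℓ)⁻¹ ^ k * geny m n ℓ ^ k) = 1 := by
      rw [← a2]; simp
    rw [← this, zpow_sub, mul_assoc]; simp)
  rw [hN, hk] at b1 b3
  have d1 : (m : ℤ) ∣ N := ⟨s, by linarith⟩
  have d2 : (m : ℤ) ∣ k := ⟨s', by linarith⟩
  refine ⟨?_, ?_, ?_⟩
  · rw [hN]; exact_mod_cast d1
  · rw [hk]; exact_mod_cast d2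
  · rw [hN, hk]
    refine ⟨r', ?_⟩
    have : (k : ℤ) ^ 2 = s' * m * k := by rw [b4]; ring
    rw [this]; linear_combination (-(m : ℤ)) * b3

lemma perm3 {α : Type*} (f : α → α) (hf : Function.Injective f) (h3 : ∀ z, f (f (f z)) = z)
    (a b c : α) (ha : f a = a ∨ f a = b ∨ f a = c) (hb : f b = a ∨ f b = b ∨ f b = c)
    (hc : f c = a ∨ f c = b ∨ f c = c) :
    (f a = a ∧ f b = b ∧ f c = c) ∨ (f a = b ∧ f b = c ∧ f c = a) ∨
      (f a = c ∧ f c = b ∧ f b = a) := by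
  have i1 := @hf a b
  have i2 := @hf a c
  have i3 := @hf b c
  have j1 := h3 a
  have j2 := h3 b
  have j3 := h3 c
  clear hf h3
  grind

lemma cond_of_aut (hm : 0 < m) (hn : 4 ≤ n) (φ : MulAut (G m n ℓ)) (ho : orderOf φ = 3)
    (hS : ⇑φ '' S m n ℓ = S m n ℓ) : Cond m n ℓ := by
  have hp : φ ^ 3 = 1 := by rw [← ho]; exact pow_orderOf_eq_one φ
  have h3 : ∀ z, φ (φ (φ z)) = z := by
    intro z
    have := DFunLike.congr_fun hp z
    simpa [pow_succ] using this
  have hm' : ∀ z ∈ S m n ℓ, φ z ∈ S m n ℓ := by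
    intro z hz
    rw [← hS]; exact ⟨z, hz, rfl⟩
  have ha := hm' (gent m n ℓ) (by simp [S])
  have hb := hm' (gent m n ℓ * genx m n ℓ) (by simp [S])
  have hc := hm' (gent m n ℓ * geny m n ℓ) (by simp [S])
  simp only [S, Set.mem_insert_iff, Set.mem_singleton_iff] at ha hb hc
  rcases perm3 φ φ.injective h3 _ _ _ ha hb hc with ⟨a, b, c⟩ | ⟨a, b, c⟩ | ⟨a, b, c⟩
  · exfalso
    have : φ = 1 := by
      apply MulEquiv.toMonoidHom_injective
      apply hom_ext' m n ℓ
      · exact a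
      · rw [map_mul, a] at b
        exact mul_left_cancel b
      · rw [map_mul, a] at c
        exact mul_left_cancel c
    rw [this, orderOf_one] at ho
    omega
  · exact cond_of_hom m n ℓ hm hn φ.toMonoidHom a b c
  · refine cond_of_hom m n ℓ hm hn φ.symm.toMonoidHom ?_ ?_ ?_
    · exact φ.symm_apply_eq.2 c.symm
    · exact φ.symm_apply_eq.2 b.symm
    · exact φ.symm_apply_eq.2 a.symm

/-- Images of the generators under the order three automorphism. -/
def autGen : Gen → G m n ℓ
  | Gen.t => gent m n ℓ * genx m n ℓ
  | Gen.x => (genx m n ℓ)⁻¹ * geny m n ℓ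
  | Gen.y => (genx m n ℓ)⁻¹

lemma aut_rels (hm : 0 < m) (h : Cond m n ℓ) :
    ∀ r ∈ rels m n ℓ, FreeGroup.lift (autGen m n ℓ) r = 1 := by
  intro r hr
  obtain ⟨⟨a, ha⟩, ⟨b, hb⟩, ⟨c, hc⟩⟩ := h
  have hxy := rel_xy m n ℓ
  have hX := rel_x m n ℓ
  have hY := rel_y m n ℓ
  have hT := rel_t m n ℓ
  have hTX := rel_tx m n ℓ
  have hTY := rel_ty m n ℓ
  have hTi : (gent m n ℓ)⁻¹ = gent m n ℓ := inv_eq_of_mul_eq_one_left hT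
  rw [hTi] at hTX hTY
  simp only [rels, Set.mem_insert_iff, Set.mem_singleton_iff] at hr
  rw [ha, hb] at hr
  rw [ha] at hX
  rw [hb] at hY
  rw [ha, hb] at hc
  have hc' : (m : ℤ) * b * b - m * b + m = m * a * c := by
    have hm0 : (m : ℤ) ≠ 0 := by omega
    apply mul_left_cancel₀ hm0
    push_cast at hc
    linear_combination hc
  rcases hr with rfl | rfl | rfl | rfl | rfl | rfl
  all_goals simp only [map_mul, map_inv, map_pow, FreeGroup.lift_apply_of, autGen]
  all_goals generalize gent m n ℓ = t at *
  · rw [pow_two, ← mul_assoc]; exact hTX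
  · rw [hxy.inv_left.mul_pow, inv_pow, hX, inv_one, one_mul, pow_mul, hY, ← pow_mul,
      show m * b * a = m * a * b by ring, pow_mul, hX, one_pow]
  · rw [mul_inv_eq_one, hxy.inv_left.mul_pow, pow_mul (geny m n ℓ), hY, ← pow_mul, inv_pow,
      inv_pow, eq_inv_mul_iff_mul_eq, mul_inv_eq_iff_eq_mul, ← pow_add]
    have hz : genx m n ℓ ^ ((m : ℤ) * b * b - m * b + m) = 1 := by
      rw [hc', zpow_mul]
      have : genx m n ℓ ^ ((m : ℤ) * a) = 1 := by exact_mod_cast hX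
      rw [this, one_zpow]
    have e : ((m * b : ℕ) : ℤ) + ((m : ℤ) * b * b - m * b + m) = ((m * b * b + m : ℕ) : ℤ) := by
      push_cast; ring
    have h4 := zpow_add (genx m n ℓ) ((m * b : ℕ) : ℤ) ((m : ℤ) * b * b - m * b + m)
    rw [e, hz, mul_one, zpow_natCast, zpow_natCast] at h4
    exact h4.symm
  · have h5 : (genx m n ℓ)⁻¹ * t = t * genx m n ℓ := by
      rw [inv_mul_eq_iff_eq_mul]
      have : t * (t * genx m n ℓ * t * genx m n ℓ) = t := by rw [hTX, mul_one]
      simp only [← mul_assoc, hT, one_mul] at this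
      rw [← mul_assoc]; exact this.symm
    rw [mul_inv_rev, hTi, h5]
    have h6 : t * genx m n ℓ * ((genx m n ℓ)⁻¹ * geny m n ℓ) * (t * genx m n ℓ) *
        ((genx m n ℓ)⁻¹ * geny m n ℓ) = t * geny m n ℓ * t * geny m n ℓ := by group
    rw [h6, hTY]
  · have h5 : (genx m n ℓ)⁻¹ * t = t * genx m n ℓ := by
      rw [inv_mul_eq_iff_eq_mul]
      have : t * (t * genx m n ℓ * t * genx m n ℓ) = t := by rw [hTX, mul_one]
      simp only [← mul_assoc, hT, one_mul] at this
      rw [← mul_assoc]; exact this.symm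
    rw [mul_inv_rev, hTi, h5]
    simp [mul_assoc, hT]
  · rw [mul_inv_eq_one, mul_inv_eq_iff_eq_mul]
    exact (Commute.refl (genx m n ℓ)⁻¹).mul_left hxy.symm.inv_right

lemma aut_of_cond (hm : 0 < m) (hn : 4 ≤ n) (h : Cond m n ℓ) :
    ∃ φ : MulAut (G m n ℓ), orderOf φ = 3 ∧ ⇑φ '' S m n ℓ = S m n ℓ := by
  let f : G m n ℓ →* G m n ℓ := PresentedGroup.toGroup (aut_rels m n ℓ hm h)
  have ft : f (gent m n ℓ) = gent m n ℓ * genx m n ℓ := PresentedGroup.toGroup.of _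
  have fx : f (genx m n ℓ) = (genx m n ℓ)⁻¹ * geny m n ℓ := PresentedGroup.toGroup.of _
  have fy : f (geny m n ℓ) = (genx m n ℓ)⁻¹ := PresentedGroup.toGroup.of _
  have f3 : f.comp (f.comp f) = MonoidHom.id _ := by
    apply hom_ext' m n ℓ <;> simp [ft, fx, fy]
  have f3' : (f.comp f).comp f = MonoidHom.id _ := f3
  let φ : MulAut (G m n ℓ) := MonoidHom.toMulEquiv f (f.comp f) f3' f3
  have hφ : ∀ z, φ z = f z := fun z => rfl
  refine ⟨φ, ?_, ?_⟩
  · have : Fact (Nat.Prime 3) := ⟨Nat.prime_three⟩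
    apply orderOf_eq_prime
    · ext z
      exact DFunLike.congr_fun f3 z
    · intro h1
      have h2 : φ (gent m n ℓ) = gent m n ℓ := by rw [h1]; rfl
      rw [hφ, ft] at h2
      exact x_ne_one m n ℓ hm hn (mul_eq_left.1 h2)
  · simp only [S, Set.image_insert_eq, Set.image_singleton, hφ, map_mul, ft, fx, fy]
    ext z
    simp
    tauto

lemma cond_iff (hm : 0 < m) (hn : 4 ≤ n) (hne : Even n) (hpar : ℓ % 2 = m % 2) :
    Cond m n ℓ ↔ (Int.gcd (n : ℤ) ((ℓ : ℤ) + m) = 2 * m ∧ Int.gcd (n : ℤ) ((ℓ : ℤ) - m) = 2 * m ∧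
        (2 * m * n : ℤ) ∣ ((ℓ : ℤ) ^ 2 + 3 * m ^ 2)) := by
  unfold Cond
  obtain ⟨N, rfl⟩ := hne
  obtain ⟨k, hk⟩ : ∃ k, ℓ + m = 2 * k := ⟨(ℓ + m) / 2, by omega⟩
  have e1 : (N + N) / 2 = N := by omega
  have e2 : (ℓ + m) / 2 = k := by omega
  have e3 : (ℓ : ℤ) = 2 * k - m := by omega
  rw [e1, e2, e3]
  have hm0 : (m : ℤ) ≠ 0 := by omega
  have key : ((m : ℤ) * N ∣ (k : ℤ) ^ 2 - m * k + m ^ 2) ↔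
      (2 * m * ((N + N : ℕ) : ℤ) ∣ ((2 * k - m : ℤ) ^ 2 + 3 * m ^ 2)) := by
    rw [← mul_dvd_mul_iff_left (show (4 : ℤ) ≠ 0 by norm_num)]
    push_cast
    ring_nf
  rw [← key]
  constructor
  · rintro ⟨⟨a, rfl⟩, ⟨b, rfl⟩, ⟨c, hc⟩⟩
    have hc' : (b : ℤ) * b - b + 1 = a * c := by
      apply mul_left_cancel₀ (mul_ne_zero hm0 hm0)
      push_cast at hc
      linear_combination hc
    have g1 : IsCoprime (a : ℤ) b := ⟨c, 1 - b, by linear_combination -hc'⟩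
    have g2 : IsCoprime (a : ℤ) (b - 1) := ⟨c, -b, by linear_combination -hc'⟩
    refine ⟨?_, ?_, ⟨c, hc⟩⟩
    · have : Int.gcd (((m * a + m * a : ℕ) : ℤ)) (2 * ((m * b : ℕ) : ℤ) - m + m)
        = Int.gcd ((2 * m : ℤ) * a) ((2 * m : ℤ) * b) := by
        congr 1 <;> push_cast <;> ring
      rw [this, Int.gcd_mul_left, Int.isCoprime_iff_gcd_eq_one.1 g1]
      simp [Int.natAbs_mul]
    · have : Int.gcd (((m * a + m * a : ℕ) : ℤ)) (2 * ((m * b : ℕ) : ℤ) - m - m)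
        = Int.gcd ((2 * m : ℤ) * a) ((2 * m : ℤ) * (b - 1)) := by
        congr 1 <;> push_cast <;> ring
      rw [this, Int.gcd_mul_left, Int.isCoprime_iff_gcd_eq_one.1 g2]
      simp [Int.natAbs_mul]
  · rintro ⟨h1, h2, h3⟩
    refine ⟨?_, ?_, h3⟩
    · have := Int.gcd_dvd_left ((N + N : ℕ) : ℤ) (2 * (k : ℤ) - m + m)
      rw [h1] at this
      obtain ⟨c, hc⟩ := this
      have : (m : ℤ) ∣ N := ⟨c, by push_cast at hc; linarith⟩
      exact_mod_cast this
    · have := Int.gcd_dvd_right ((N + N : ℕ) : ℤ) (2 * (k : ℤ) - m + m)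
      rw [h1] at this
      obtain ⟨c, hc⟩ := this
      have : (m : ℤ) ∣ k := ⟨c, by push_cast at hc; linarith⟩
      exact_mod_cast this

end helpers

/-- **Lemma 4.4.** There exists an automorphism of `G` of order `3` fixing the set
`{t, tx, ty}` setwise iff `gcd(n,ℓ+m) = gcd(n,ℓ-m) = 2m` and `2mn ∣ ℓ² + 3m²`. -/
theorem statement10 (m n ℓ : ℕ) (hm : 0 < m) (hn : 4 ≤ n) (hne : Even n)
    (hl : ℓ ≤ n - 1) (hpar : ℓ % 2 = m % 2) :
    (∃ φ : MulAut (G m n ℓ), orderOf φ = 3 ∧ ⇑φ '' S m n ℓ = S m n ℓ) ↔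
      (Int.gcd (n : ℤ) ((ℓ : ℤ) + m) = 2 * m ∧ Int.gcd (n : ℤ) ((ℓ : ℤ) - m) = 2 * m ∧
        (2 * m * n : ℤ) ∣ ((ℓ : ℤ) ^ 2 + 3 * m ^ 2)) := by
  rw [← cond_iff m n ℓ hm hn hne hpar]
  constructor
  · rintro ⟨φ, ho, hS⟩
    exact cond_of_aut m n ℓ hm hn φ ho hS
  · exact aut_of_cond m n ℓ hm hn

end HTGPaper
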